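/- Let (f_n)_n be a sequence of meromorphic functions on 𝔻 such that (f_n''/f_n')_n converges locally uniformly on all of 𝔻 to a function F_1 that is holomorphic on 𝔻, and such that f_n' is zero-free on 𝔻 for every n. Then (f_n'/f_n)_n is normal on 𝔻 and no subsequence of (f_n'/f_n)_n converges locally uniformly to the constant ∞ on 𝔻. -/

import Mathlib

open Filter Topology
open scoped Classical

noncomputable section

/-- The chordal (spherical) distance on the Riemann sphere `ℂ ∪ {∞} = OnePoint ℂ`. -/
def sphDist (a b : OnePoint ℂ) : ℝ :=
  Option.elim a (Option.elim b 0 fun w => 2 / Real.sqrt (1 + ‖w‖ ^ 2))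
    fun z =>
      Option.elim b (2 / Real.sqrt (1 + ‖z‖ ^ 2)) fun w =>
        2 * ‖z - w‖ / (Real.sqrt (1 + ‖z‖ ^ 2) * Real.sqrt (1 + ‖w‖ ^ 2))

/-- The set of poles of a function `f : ℂ → ℂ`: the points where `‖f‖` tends to `∞`. -/
def polesOf (f : ℂ → ℂ) : Set ℂ :=
  {z | Filter.Tendsto (fun w => ‖f w‖) (𝓝[≠] z) Filter.atTop}

/-- View a `ℂ`-valued (meromorphic) function as a map into the Riemann sphere:
at its poles the value is `∞`. -/
def toSphere (f : ℂ → ℂ) : ℂ → OnePoint ℂ := fun z =>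
  if z ∈ polesOf f then OnePoint.infty else (f z : OnePoint ℂ)

/-- Locally uniform convergence on `U` of sphere-valued functions, with respect to the
spherical (chordal) metric. -/
def SphLocUnifOn (f : ℕ → ℂ → OnePoint ℂ) (g : ℂ → OnePoint ℂ) (U : Set ℂ) : Prop :=
  ∀ ε > (0 : ℝ), ∀ x ∈ U, ∃ t ∈ 𝓝[U] x,
    ∀ᶠ n in Filter.atTop, ∀ y ∈ t, sphDist (f n y) (g y) < ε

/-- The quotient `f^{(j+1)}/f^{(j)}` of successive derivatives of `f`. -/
def derivQuot (j : ℕ) (f : ℂ → ℂ) : ℂ → ℂ := fun z =>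
  iteratedDeriv (j + 1) f z / iteratedDeriv j f z

/-- The derived set of `E` with respect to `D`: accumulation points of `E` lying in `D`. -/
def derivedSetIn (D E : Set ℂ) : Set ℂ := {z ∈ D | AccPt z (Filter.principal E)}

/-- Iterated derived sets of `E` with respect to `D`. -/
def iteratedDerivedSetIn (D : Set ℂ) : ℕ → Set ℂ → Set ℂ
  | 0, E => E
  | k + 1, E => derivedSetIn D (iteratedDerivedSetIn D k E)

/-- A sequence of functions is `Q_m`-normal on `D`: every subsequence has a further
subsequence converging locally uniformly, with respect to the spherical metric, on `D \ E`
for some set `E ⊆ D` whose `m`-th derived set with respect to `D` is empty. -/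
def QmNormalSeqOn (m : ℕ) (D : Set ℂ) (f : ℕ → ℂ → ℂ) : Prop :=
  ∀ φ : ℕ → ℕ, StrictMono φ → ∃ ψ : ℕ → ℕ, StrictMono ψ ∧
    ∃ E ⊆ D, iteratedDerivedSetIn D m E = ∅ ∧
      ∃ g : ℂ → OnePoint ℂ, SphLocUnifOn (fun k => toSphere (f (φ (ψ k)))) g (D \ E)


/-- The open unit disk in `ℂ`. -/
def unitDisk : Set ℂ := Metric.ball 0 1

/-- The pre-Schwarzian `f''/f'` of `f`. -/
def preSchwarzian (f : ℂ → ℂ) : ℂ → ℂ := fun z => deriv (deriv f) z / deriv f z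

/-- The Schwarzian derivative `S_f = (f''/f')' - (1/2) (f''/f')²` of `f`. -/
def schwarzian (f : ℂ → ℂ) : ℂ → ℂ := fun z =>
  deriv (preSchwarzian f) z - (1 / 2) * preSchwarzian f z ^ 2

/-- `f` has a Schwarzian derivative that is holomorphic on the unit disk and bounded by `M`
there: there is a function `S`, holomorphic on `𝔻` and bounded by `M` on `𝔻`, agreeing with
the pointwise Schwarzian of `f` wherever the latter formula is meaningful (i.e. where `f` is
analytic and `f' ≠ 0`). -/
def HasBddHoloSchwarzian (f : ℂ → ℂ) (M : ℝ) : Prop :=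
  ∃ S : ℂ → ℂ, DifferentiableOn ℂ S unitDisk ∧ (∀ z ∈ unitDisk, ‖S z‖ ≤ M) ∧
    ∀ z ∈ unitDisk, AnalyticAt ℂ f z → deriv f z ≠ 0 → S z = schwarzian f z

/-!
Fix `z₀`. The normalized functions `Eₙ = (fₙ - fₙ(z₀)) / fₙ'(z₀)` have zero-free derivative `Eₙ'`
with value `1` at `z₀` and logarithmic derivative `fₙ'' / fₙ'`. Integrating twice, the convergence
of `fₙ'' / fₙ'` gives `Eₙ' → E'` with `E'` zero-free, and then `Eₙ → E`. Since
`fₙ = fₙ(z₀) + fₙ'(z₀) Eₙ`, it only remains to pass to a subsequence along which the point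
`[fₙ'(z₀) : fₙ(z₀)]` of the projective line converges, say to `[s : t]`: then suitable multiples
`cₙ fₙ` converge to `h = t + s E`, where `h` and `h' = s E'` have no common zero. Hence
`fₙ' / fₙ = (cₙ fₙ)' / (cₙ fₙ)` converges to `h' / h` spherically, and this is not identically `∞`
because `h` does not vanish identically.
-/

section LocallyUniformConvergence

open scoped Uniformity

variable {ι α β : Type*} [TopologicalSpace α] [UniformSpace β] {l : Filter ι} {U : Set α}
  {F : ι → α → β} {f : α → β}

theorem tendstoLocallyUniformlyOn_iff_tendsto_prod (hf : ContinuousOn f U) :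
    TendstoLocallyUniformlyOn F f l U ↔
      ∀ x ∈ U, Tendsto (fun p : ι × α => F p.1 p.2) (l ×ˢ 𝓝[U] x) (𝓝 (f x)) := by
  rw [tendstoLocallyUniformlyOn_iff_forall_tendsto]
  refine forall₂_congr fun x hx => ?_
  have hfx : Tendsto (fun p : ι × α => (f x, f p.2)) (l ×ˢ 𝓝[U] x) (𝓤 β) :=
    Uniform.tendsto_nhds_right.1 ((hf x hx).tendsto.comp tendsto_snd)
  rw [Uniform.tendsto_nhds_right]
  exact ⟨hfx.uniformity_trans, hfx.uniformity_symm.uniformity_trans⟩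

/-- By `hloc`, the points of `U` at which `F` converges to a limit in `S` are clopen in `U`. -/
theorem exists_tendstoLocallyUniformlyOn_of_isPreconnected [T2Space β] [l.NeBot] {S : Set β}
    (hU : IsPreconnected U)
    (hloc : ∀ x ∈ U, ∃ V ⊆ U, IsOpen V ∧ x ∈ V ∧ ∀ y ∈ V, ∀ b ∈ S,
      Tendsto (F · y) l (𝓝 b) → ∃ g, TendstoLocallyUniformlyOn F g l V ∧ Set.MapsTo g V S)
    {x₀ : α} (hx₀ : x₀ ∈ U) {b₀ : β} (hb₀ : b₀ ∈ S) (hF : Tendsto (F · x₀) l (𝓝 b₀)) :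
    ∃ g, TendstoLocallyUniformlyOn F g l U ∧ Set.MapsTo g U S := by
  let Conv (x : α) : Prop := ∃ b ∈ S, Tendsto (F · x) l (𝓝 b)
  have conv_of_conv : ∀ x ∈ U, ∀ᶠ y in 𝓝[U] x, (Conv x → Conv y) ∧ (Conv y → Conv x) := by
    intro x hx
    obtain ⟨V, -, hVo, hxV, hV⟩ := hloc x hx
    have spread : ∀ y ∈ V, ∀ z ∈ V, Conv y → Conv z := fun y hy z hz ⟨b, hb, hyb⟩ =>
      have ⟨g, hg, hgS⟩ := hV y hy b hb hyb
      ⟨g z, hgS hz, hg.tendsto_at hz⟩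
    filter_upwards [mem_nhdsWithin_of_mem_nhds (hVo.mem_nhds hxV)] with y hy
    exact ⟨spread x hxV y hy, spread y hy x hxV⟩
  have hconv : ∀ x ∈ U, Conv x := fun x hx =>
    hU.induction₂' (fun x y => Conv x → Conv y) conv_of_conv
      (fun _ _ _ _ _ _ hxy hyz h => hyz (hxy h)) hx₀ hx ⟨b₀, hb₀, hF⟩
  have : Nonempty β := ⟨b₀⟩
  choose! g hgS hg using hconv
  refine ⟨g, fun u hu x hx => ?_, hgS⟩
  obtain ⟨V, hVU, hVo, hxV, hV⟩ := hloc x hx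
  obtain ⟨g', hg', -⟩ := hV x hxV (g x) (hgS x hx) (hg x hx)
  have hgV : TendstoLocallyUniformlyOn F g l V := hg'.congr_right fun y hy =>
    tendsto_nhds_unique (hg'.tendsto_at hy) (hg y (hVU hy))
  obtain ⟨t, ht, hFt⟩ := hgV u hu x hxV
  rw [hVo.nhdsWithin_eq hxV] at ht
  exact ⟨t, mem_nhdsWithin_of_mem_nhds ht, hFt⟩

end LocallyUniformConvergence

section Primitives

variable {ι : Type*} {l : Filter ι}

section RCLike

variable {𝕜 G : Type*} [RCLike 𝕜] [NormedAddCommGroup G] [NormedSpace 𝕜 G] {U : Set 𝕜}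
  {f f' : ι → 𝕜 → G}

theorem cauchy_map_of_uniformCauchySeqOn_deriv (hUo : IsOpen U) (hUc : IsPreconnected U)
    (hf' : UniformCauchySeqOn f' l U) (hf : ∀ n, ∀ z ∈ U, HasDerivAt (f n) (f' n z) z)
    {y z : 𝕜} (hy : y ∈ U) (hz : z ∈ U) (hfy : Cauchy (map (f · y) l)) :
    Cauchy (map (f · z) l) :=
  cauchy_map_of_uniformCauchySeqOn_fderiv hUo hUc
    ((ContinuousLinearMap.smulRightL 𝕜 𝕜 G 1).uniformContinuous.comp_uniformCauchySeqOn hf')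
    (fun n z hz => (hf n z hz).hasFDerivAt) hy hz hfy

theorem exists_tendstoLocallyUniformlyOn_of_hasDerivAt [l.NeBot] [CompleteSpace G]
    {g' : 𝕜 → G} (hUo : IsOpen U) (hUc : IsPreconnected U)
    (hf : ∀ n, ∀ z ∈ U, HasDerivAt (f n) (f' n z) z) (hf' : TendstoLocallyUniformlyOn f' g' l U)
    {z₀ : 𝕜} (hz₀ : z₀ ∈ U) {b₀ : G} (hb₀ : Tendsto (f · z₀) l (𝓝 b₀)) :
    ∃ g, TendstoLocallyUniformlyOn f g l U := by
  suffices ∃ g, TendstoLocallyUniformlyOn f g l U ∧ Set.MapsTo g U Set.univ from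
    this.imp fun _ hg => hg.1
  refine exists_tendstoLocallyUniformlyOn_of_isPreconnected hUc (fun x hx => ?_) hz₀
    (Set.mem_univ b₀) hb₀
  obtain ⟨r, hr, hrU⟩ := Metric.nhds_basis_closedBall.mem_iff.1 (hUo.mem_nhds hx)
  have hBU : Metric.ball x r ⊆ U := Metric.ball_subset_closedBall.trans hrU
  refine ⟨Metric.ball x r, hBU, Metric.isOpen_ball, Metric.mem_ball_self hr, fun y hy b _ hb => ?_⟩
  have hf'B : UniformCauchySeqOn f' l (Metric.ball x r) :=
    (((tendstoLocallyUniformlyOn_iff_forall_isCompact hUo).1 hf' _ hrU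
      (isCompact_closedBall x r)).mono Metric.ball_subset_closedBall).uniformCauchySeqOn
  have hfB : ∀ n, ∀ z ∈ Metric.ball x r, HasDerivAt (f n) (f' n z) z := fun n z hz =>
    hf n z (hBU hz)
  have hcauchy : ∀ z ∈ Metric.ball x r, Cauchy (map (f · z) l) := fun z hz =>
    cauchy_map_of_uniformCauchySeqOn_deriv Metric.isOpen_ball Metric.isPreconnected_ball hf'B hfB
      hy hz hb.cauchy_map
  choose! g hg using fun z hz => cauchy_iff_exists_le_nhds.1 (hcauchy z hz)
  have hunif := (uniformCauchySeqOn_ball_of_deriv hf'B hfB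
    (hcauchy x (Metric.mem_ball_self hr))).tendstoUniformlyOn_of_tendsto hg
  exact ⟨g, hunif.tendstoLocallyUniformlyOn, Set.mapsTo_univ _ _⟩

end RCLike

theorem exists_eq_mul_exp_of_ne_zero {w : ℂ → ℂ} {c : ℂ} {r : ℝ}
    (hw : DifferentiableOn ℂ w (Metric.ball c r)) (hw₀ : ∀ z ∈ Metric.ball c r, w z ≠ 0)
    {y : ℂ} (hy : y ∈ Metric.ball c r) :
    ∃ L : ℂ → ℂ, L y = 0 ∧ (∀ z ∈ Metric.ball c r, HasDerivAt L (logDeriv w z) z) ∧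
      ∀ z ∈ Metric.ball c r, w z = w y * Complex.exp (L z) := by
  have hlog : DifferentiableOn ℂ (logDeriv w) (Metric.ball c r) :=
    (hw.deriv Metric.isOpen_ball).div hw hw₀
  obtain ⟨L, hLy, hL⟩ := hlog.isExactOn_ball.with_val_at y 0
  have hexp : DifferentiableOn ℂ (fun z => Complex.exp (L z)) (Metric.ball c r) := fun z hz =>
    (hL z hz).cexp.differentiableAt.differentiableWithinAt
  have heq : Set.EqOn (logDeriv w) (logDeriv fun z => Complex.exp (L z)) (Metric.ball c r) :=
    fun z hz => by
      rw [logDeriv_apply (fun z => Complex.exp (L z)), (hL z hz).cexp.deriv,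
        mul_div_cancel_left₀ _ (Complex.exp_ne_zero _)]
  obtain ⟨a, -, ha⟩ := (logDeriv_eqOn_iff hw hexp Metric.isOpen_ball
    Metric.isPreconnected_ball (fun _ _ => Complex.exp_ne_zero _) hw₀).1 heq
  have hay : a = w y := by simp [ha hy, hLy]
  exact ⟨L, hLy, hL, fun z hz => by simpa [hay] using ha hz⟩

theorem exists_tendstoLocallyUniformlyOn_of_logDeriv [l.NeBot] {U : Set ℂ} {w : ι → ℂ → ℂ}
    {F : ℂ → ℂ} (hUo : IsOpen U) (hUc : IsPreconnected U) (hw : ∀ n, DifferentiableOn ℂ (w n) U)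
    (hw₀ : ∀ n, ∀ z ∈ U, w n z ≠ 0)
    (hF : TendstoLocallyUniformlyOn (fun n => logDeriv (w n)) F l U)
    {z₀ : ℂ} (hz₀ : z₀ ∈ U) {b₀ : ℂ} (hb₀ : b₀ ≠ 0) (hlim : Tendsto (w · z₀) l (𝓝 b₀)) :
    ∃ W, TendstoLocallyUniformlyOn w W l U ∧ ∀ z ∈ U, W z ≠ 0 := by
  refine exists_tendstoLocallyUniformlyOn_of_isPreconnected (S := {0}ᶜ) hUc (fun x hx => ?_) hz₀
    hb₀ hlim
  obtain ⟨r, hr, hBU⟩ := Metric.isOpen_iff.1 hUo x hx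
  refine ⟨Metric.ball x r, hBU, Metric.isOpen_ball, Metric.mem_ball_self hr,
    fun y hy b hb hyb => ?_⟩
  choose L hLy hL hwL using fun n =>
    exists_eq_mul_exp_of_ne_zero ((hw n).mono hBU) (fun z hz => hw₀ n z (hBU hz)) hy
  obtain ⟨M, hM⟩ := exists_tendstoLocallyUniformlyOn_of_hasDerivAt Metric.isOpen_ball
    Metric.isPreconnected_ball hL (hF.mono hBU) hy (b₀ := 0) (by simp [hLy])
  have hMc : ContinuousOn M (Metric.ball x r) := hM.continuousOn <| .of_forall fun n z hz =>
    (hL n z hz).continuousAt.continuousWithinAt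
  refine ⟨fun z => b * Complex.exp (M z), ?_, fun z _ => mul_ne_zero hb (Complex.exp_ne_zero _)⟩
  suffices TendstoLocallyUniformlyOn (fun n z => w n y * Complex.exp (L n z))
      (fun z => b * Complex.exp (M z)) l (Metric.ball x r) from
    this.congr fun n z hz => (hwL n z hz).symm
  refine (tendstoLocallyUniformlyOn_iff_tendsto_prod
    (ContinuousOn.mul continuousOn_const hMc.cexp)).2 fun z hz => ?_
  exact (hyb.comp tendsto_fst).mul
    ((tendstoLocallyUniformlyOn_iff_tendsto_prod hMc).1 hM z hz).cexp

end Primitives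

section AffineNormalization

theorem differentiableOn_of_deriv_ne_zero {𝕜 E : Type*} [NontriviallyNormedField 𝕜]
    [NormedAddCommGroup E] [NormedSpace 𝕜 E] {f : 𝕜 → E} {U : Set 𝕜}
    (hf : ∀ z ∈ U, deriv f z ≠ 0) : DifferentiableOn 𝕜 f U := fun z hz =>
  (differentiableAt_of_deriv_ne_zero (hf z hz)).differentiableWithinAt

/-- The affine renormalization `(f - f(z₀)) / f'(z₀)` of `f`, which vanishes to first order at `z₀`
with derivative `1` as soon as `f'(z₀) ≠ 0`. -/
def affineNormalization (f : ℂ → ℂ) (z₀ : ℂ) : ℂ → ℂ := fun z => (f z - f z₀) / deriv f z₀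

theorem eq_add_mul_affineNormalization {f : ℂ → ℂ} {z₀ : ℂ} (h : deriv f z₀ ≠ 0) (z : ℂ) :
    f z = f z₀ + deriv f z₀ * affineNormalization f z₀ z := by
  rw [affineNormalization, mul_div_cancel₀ _ h, add_sub_cancel]

theorem deriv_affineNormalization (f : ℂ → ℂ) (z₀ : ℂ) :
    deriv (affineNormalization f z₀) = fun z => (deriv f z₀)⁻¹ * deriv f z := by
  ext z
  unfold affineNormalization
  rw [deriv_div_const, deriv_sub_const, div_eq_inv_mul]

theorem exists_tendstoLocallyUniformlyOn_affineNormalization {ι : Type*} {l : Filter ι} [l.NeBot]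
    {U : Set ℂ} {f : ι → ℂ → ℂ} {F : ℂ → ℂ} (hUo : IsOpen U) (hUc : IsPreconnected U)
    (hf : ∀ n, ∀ z ∈ U, deriv (f n) z ≠ 0)
    (hF : TendstoLocallyUniformlyOn (fun n => logDeriv (deriv (f n))) F l U)
    {z₀ : ℂ} (hz₀ : z₀ ∈ U) :
    ∃ E, TendstoLocallyUniformlyOn (fun n => affineNormalization (f n) z₀) E l U ∧
      ∀ z ∈ U, deriv E z ≠ 0 := by
  set g : ι → ℂ → ℂ := fun n => affineNormalization (f n) z₀ with hg
  have hg'₀ : ∀ n, ∀ z ∈ U, deriv (g n) z ≠ 0 := fun n z hz => by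
    simpa only [hg, deriv_affineNormalization] using
      mul_ne_zero (inv_ne_zero (hf n z₀ hz₀)) (hf n z hz)
  have hgd : ∀ n, DifferentiableOn ℂ (g n) U := fun n => differentiableOn_of_deriv_ne_zero (hg'₀ n)
  have hlog : TendstoLocallyUniformlyOn (fun n => logDeriv (deriv (g n))) F l U :=
    hF.congr fun n z _ => by
      simp only [hg, deriv_affineNormalization]
      exact (logDeriv_const_mul z _ (inv_ne_zero (hf n z₀ hz₀))).symm
  obtain ⟨w, hw, hw₀⟩ := exists_tendstoLocallyUniformlyOn_of_logDeriv hUo hUc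
    (fun n => (hgd n).deriv hUo) hg'₀ hlog hz₀ one_ne_zero
    (tendsto_const_nhds.congr fun n => by
      simp only [hg, deriv_affineNormalization, inv_mul_cancel₀ (hf n z₀ hz₀)])
  obtain ⟨E, hE⟩ := exists_tendstoLocallyUniformlyOn_of_hasDerivAt hUo hUc
    (fun n z hz => ((hgd n).differentiableAt (hUo.mem_nhds hz)).hasDerivAt) hw hz₀
    (b₀ := 0) (by simp [hg, affineNormalization])
  have hderiv : Set.EqOn (deriv E) w U := (hE.deriv (.of_forall hgd) hUo).unique hw
  exact ⟨E, hE, fun z hz => hderiv hz ▸ hw₀ z hz⟩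

end AffineNormalization

section Subsequences

theorem exists_subseq_smul_tendsto_ne_zero {𝕜 E : Type*} [RCLike 𝕜] [NormedAddCommGroup E]
    [NormedSpace 𝕜 E] [ProperSpace E] {v : ℕ → E} (hv : ∀ n, v n ≠ 0) :
    ∃ ψ : ℕ → ℕ, StrictMono ψ ∧ ∃ c : ℕ → 𝕜, (∀ k, c k ≠ 0) ∧
      ∃ w ≠ 0, Tendsto (fun k => c k • v (ψ k)) atTop (𝓝 w) := by
  let c (n : ℕ) : 𝕜 := (‖v n‖⁻¹ : ℝ)
  have hmem (n : ℕ) : c n • v n ∈ Metric.sphere (0 : E) 1 := by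
    simpa [c] using norm_smul_inv_norm (𝕜 := 𝕜) (hv n)
  obtain ⟨w, hw, ψ, hψ, hlim⟩ := (isCompact_sphere (0 : E) 1).tendsto_subseq hmem
  exact ⟨ψ, hψ, c ∘ ψ, fun k => by simp [c, hv], w, ne_zero_of_mem_unit_sphere ⟨w, hw⟩, hlim⟩

theorem exists_subseq_logDeriv_eq_tendstoLocallyUniformlyOn {U : Set ℂ} {f : ℕ → ℂ → ℂ}
    {F : ℂ → ℂ} (hUo : IsOpen U) (hUc : IsConnected U) (hf : ∀ n, ∀ z ∈ U, deriv (f n) z ≠ 0)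
    (hF : TendstoLocallyUniformlyOn (fun n => logDeriv (deriv (f n))) F atTop U) :
    ∃ ψ : ℕ → ℕ, StrictMono ψ ∧ ∃ (g : ℕ → ℂ → ℂ) (h : ℂ → ℂ),
      (∀ k, logDeriv (g k) = logDeriv (f (ψ k))) ∧ (∀ k, ∀ z ∈ U, deriv (g k) z ≠ 0) ∧
      TendstoLocallyUniformlyOn g h atTop U ∧ ∀ z ∈ U, deriv h z ≠ 0 ∨ h z ≠ 0 := by
  obtain ⟨z₀, hz₀⟩ := hUc.nonempty
  obtain ⟨E, hE, hE'⟩ := exists_tendstoLocallyUniformlyOn_affineNormalization hUo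
    hUc.isPreconnected hf hF hz₀
  obtain ⟨ψ, hψ, c, hc, ⟨s, t⟩, hst, hlim⟩ := exists_subseq_smul_tendsto_ne_zero (𝕜 := ℂ)
    (v := fun n => (deriv (f n) z₀, f n z₀)) fun n h => hf n z₀ hz₀ (congrArg Prod.fst h)
  refine ⟨ψ, hψ, fun k z => c k * f (ψ k) z, fun z => t + s * E z,
    fun k => funext fun z => logDeriv_const_mul z _ (hc k), fun k z hz => ?_, ?_, fun z hzU => ?_⟩
  · rw [deriv_const_mul_field]
    exact mul_ne_zero (hc k) (hf (ψ k) z hz)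
  · have hs : Tendsto (fun k => c k * deriv (f (ψ k)) z₀) atTop (𝓝 s) := hlim.fst_nhds
    have ht : Tendsto (fun k => c k * f (ψ k) z₀) atTop (𝓝 t) := hlim.snd_nhds
    have hEc : ContinuousOn E U := (differentiableOn_of_deriv_ne_zero hE').continuousOn
    have hprod := (tendstoLocallyUniformlyOn_iff_tendsto_prod hEc).1 hE
    refine (tendstoLocallyUniformlyOn_iff_tendsto_prod
      (continuousOn_const.add (continuousOn_const.mul hEc))).2 fun z hz => ?_
    refine ((ht.comp tendsto_fst).add ((hs.comp tendsto_fst).mul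
      ((hprod z hz).comp (hψ.tendsto_atTop.prodMap tendsto_id)))).congr fun ⟨k, y⟩ => ?_
    simp only [Function.comp_apply, Prod.map_apply, id_eq]
    rw [eq_add_mul_affineNormalization (hf (ψ k) z₀ hz₀) y]
    ring
  · by_contra! hz
    obtain ⟨hhz', hhz⟩ := hz
    have hs : s = 0 := by simpa [hE' z hzU] using hhz'
    have ht : t = 0 := by simpa [hs] using hhz
    exact hst (Prod.ext hs ht)

end Subsequences

section Sphere

/-- The point `[a : b]` of the projective line, i.e. the quotient `a / b` as a point of the Riemann
sphere, with `a / 0 = ∞`. -/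
def sphereQuot (a b : ℂ) : OnePoint ℂ :=
  if b = 0 then OnePoint.infty else ((a / b : ℂ) : OnePoint ℂ)

theorem sphereQuot_zero (a : ℂ) : sphereQuot a 0 = OnePoint.infty := if_pos rfl

theorem sphereQuot_of_ne_zero (a : ℂ) {b : ℂ} (hb : b ≠ 0) : sphereQuot a b = (a / b : ℂ) :=
  if_neg hb

theorem sphDist_coe_coe (z w : ℂ) :
    sphDist z w = 2 * ‖z - w‖ / (√(1 + ‖z‖ ^ 2) * √(1 + ‖w‖ ^ 2)) := rfl

theorem sphDist_coe_infty (z : ℂ) : sphDist z OnePoint.infty = 2 / √(1 + ‖z‖ ^ 2) := rfl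

theorem sphDist_comm (p q : OnePoint ℂ) : sphDist p q = sphDist q p := by
  induction p <;> induction q <;> try rfl
  rw [sphDist_coe_coe, sphDist_coe_coe, norm_sub_rev, mul_comm √_]

theorem sphDist_self (p : OnePoint ℂ) : sphDist p p = 0 := by
  induction p
  · rfl
  · simp [sphDist_coe_coe]

theorem sqrt_one_add_norm_div_sq (a : ℂ) {b : ℂ} (hb : b ≠ 0) :
    √(1 + ‖a / b‖ ^ 2) = √(‖a‖ ^ 2 + ‖b‖ ^ 2) / ‖b‖ := by
  have hb' : ‖b‖ ≠ 0 := norm_ne_zero_iff.2 hb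
  have hsq : 1 + ‖a / b‖ ^ 2 = (‖a‖ ^ 2 + ‖b‖ ^ 2) / ‖b‖ ^ 2 := by
    rw [norm_div]
    field_simp
    ring
  rw [hsq, Real.sqrt_div (by positivity), Real.sqrt_sq (norm_nonneg b)]

theorem sqrt_norm_sq_add_norm_sq_ne_zero {a b : ℂ} (h : a ≠ 0 ∨ b ≠ 0) :
    √(‖a‖ ^ 2 + ‖b‖ ^ 2) ≠ 0 := by
  refine (Real.sqrt_pos.2 ?_).ne'
  rcases h with h | h <;> have := norm_pos_iff.2 h <;> positivity

theorem sphDist_sphereQuot_infty {a b : ℂ} (h : a ≠ 0 ∨ b ≠ 0) :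
    sphDist (sphereQuot a b) OnePoint.infty = 2 * ‖b‖ / √(‖a‖ ^ 2 + ‖b‖ ^ 2) := by
  rcases eq_or_ne b 0 with rfl | hb
  · simp [sphereQuot_zero, sphDist_self]
  · rw [sphereQuot_of_ne_zero a hb, sphDist_coe_infty, sqrt_one_add_norm_div_sq a hb,
      div_div_eq_mul_div]

theorem sphDist_sphereQuot {a b c d : ℂ} (hab : a ≠ 0 ∨ b ≠ 0) (hcd : c ≠ 0 ∨ d ≠ 0) :
    sphDist (sphereQuot a b) (sphereQuot c d) =
      2 * ‖a * d - c * b‖ / (√(‖a‖ ^ 2 + ‖b‖ ^ 2) * √(‖c‖ ^ 2 + ‖d‖ ^ 2)) := by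
  have hab' := sqrt_norm_sq_add_norm_sq_ne_zero hab
  have hcd' := sqrt_norm_sq_add_norm_sq_ne_zero hcd
  rcases eq_or_ne d 0 with rfl | hd
  · have hc : ‖c‖ ≠ 0 := by simpa using hcd
    rw [sphereQuot_zero, sphDist_sphereQuot_infty hab]
    simp only [mul_zero, zero_sub, norm_neg, norm_mul, norm_zero, ne_eq, OfNat.ofNat_ne_zero,
      not_false_eq_true, zero_pow, add_zero, Real.sqrt_sq (norm_nonneg c)]
    field_simp
  rcases eq_or_ne b 0 with rfl | hb
  · have ha : ‖a‖ ≠ 0 := by simpa using hab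
    rw [sphereQuot_zero, sphDist_comm, sphDist_sphereQuot_infty hcd]
    simp only [mul_zero, sub_zero, norm_mul, norm_zero, ne_eq, OfNat.ofNat_ne_zero,
      not_false_eq_true, zero_pow, add_zero, Real.sqrt_sq (norm_nonneg a)]
    field_simp
  · have hsub : a / b - c / d = (a * d - c * b) / (b * d) := by field_simp
    rw [sphereQuot_of_ne_zero a hb, sphereQuot_of_ne_zero c hd, sphDist_coe_coe,
      sqrt_one_add_norm_div_sq a hb, sqrt_one_add_norm_div_sq c hd, hsub, norm_div, norm_mul b d]
    field_simp

theorem tendsto_sphDist_sphereQuot {ι : Type*} {l : Filter ι} {A B C D : ι → ℂ} {a b c d : ℂ}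
    (hA : Tendsto A l (𝓝 a)) (hB : Tendsto B l (𝓝 b)) (hC : Tendsto C l (𝓝 c))
    (hD : Tendsto D l (𝓝 d)) (hab : a ≠ 0 ∨ b ≠ 0) (hcd : c ≠ 0 ∨ d ≠ 0) :
    Tendsto (fun i => sphDist (sphereQuot (A i) (B i)) (sphereQuot (C i) (D i))) l
      (𝓝 (sphDist (sphereQuot a b) (sphereQuot c d))) := by
  have eventually_ne_or_ne {X Y : ι → ℂ} {x y : ℂ} (hX : Tendsto X l (𝓝 x))
      (hY : Tendsto Y l (𝓝 y)) (hxy : x ≠ 0 ∨ y ≠ 0) : ∀ᶠ i in l, X i ≠ 0 ∨ Y i ≠ 0 :=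
    hxy.elim (fun h => (hX.eventually_ne h).mono fun _ => Or.inl)
      fun h => (hY.eventually_ne h).mono fun _ => Or.inr
  rw [sphDist_sphereQuot hab hcd]
  refine Tendsto.congr' (f₁ := fun i => 2 * ‖A i * D i - C i * B i‖ /
    (√(‖A i‖ ^ 2 + ‖B i‖ ^ 2) * √(‖C i‖ ^ 2 + ‖D i‖ ^ 2))) ?_ ?_
  · filter_upwards [eventually_ne_or_ne hA hB hab, eventually_ne_or_ne hC hD hcd] with i hi hi'
    exact (sphDist_sphereQuot hi hi').symm
  · exact ((((hA.mul hD).sub (hC.mul hB)).norm).const_mul 2).div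
      (((hA.norm.pow 2).add (hB.norm.pow 2)).sqrt.mul ((hC.norm.pow 2).add (hD.norm.pow 2)).sqrt)
      (mul_ne_zero (sqrt_norm_sq_add_norm_sq_ne_zero hab) (sqrt_norm_sq_add_norm_sq_ne_zero hcd))

end Sphere

section SphericalConvergence

theorem sphDist_nonneg (p q : OnePoint ℂ) : 0 ≤ sphDist p q := by
  induction p <;> induction q
  · exact (sphDist_self _).ge
  · rw [sphDist_comm, sphDist_coe_infty]
    positivity
  · rw [sphDist_coe_infty]
    positivity
  · rw [sphDist_coe_coe]
    positivity

theorem sphLocUnifOn_iff_tendsto {f : ℕ → ℂ → OnePoint ℂ} {g : ℂ → OnePoint ℂ} {U : Set ℂ} :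
    SphLocUnifOn f g U ↔ ∀ x ∈ U,
      Tendsto (fun p : ℕ × ℂ => sphDist (f p.1 p.2) (g p.2)) (atTop ×ˢ 𝓝[U] x) (𝓝 0) := by
  have hdist (p q : OnePoint ℂ) : dist (sphDist p q) 0 = sphDist p q := by
    rw [Real.dist_0_eq_abs, abs_of_nonneg (sphDist_nonneg p q)]
  simp only [SphLocUnifOn, Metric.tendsto_nhds, hdist, Filter.Eventually, mem_prod_iff_right,
    Set.mem_ofPred_eq]
  exact ⟨fun h x hx ε hε => h ε hε x hx, fun h ε hε x hx => h x hx ε hε⟩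

namespace SphLocUnifOn

variable {f f' : ℕ → ℂ → OnePoint ℂ} {g : ℂ → OnePoint ℂ} {U : Set ℂ}

theorem tendsto_sphDist (h : SphLocUnifOn f g U) {x : ℂ} (hx : x ∈ U) :
    Tendsto (fun n => sphDist (f n x) (g x)) atTop (𝓝 0) :=
  (sphLocUnifOn_iff_tendsto.1 h x hx).comp <|
    tendsto_id.prodMk (tendsto_const_pure.mono_right (pure_le_nhdsWithin hx))

theorem comp_tendsto (h : SphLocUnifOn f g U) {φ : ℕ → ℕ} (hφ : Tendsto φ atTop atTop) :
    SphLocUnifOn (fun k => f (φ k)) g U :=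
  sphLocUnifOn_iff_tendsto.2 fun x hx =>
    (sphLocUnifOn_iff_tendsto.1 h x hx).comp (hφ.prodMap tendsto_id)

theorem congr (h : SphLocUnifOn f g U) (hff' : ∀ n, Set.EqOn (f n) (f' n) U) :
    SphLocUnifOn f' g U :=
  sphLocUnifOn_iff_tendsto.2 fun x hx => (sphLocUnifOn_iff_tendsto.1 h x hx).congr' <| by
    filter_upwards [tendsto_snd.eventually eventually_mem_nhdsWithin] with p hp
    rw [hff' p.1 hp]

end SphLocUnifOn

theorem norm_sub_le_sphDist_mul {z w : ℂ} (h : sphDist z w * √(1 + ‖w‖ ^ 2) ≤ 1) :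
    ‖z - w‖ ≤ sphDist z w * (1 + ‖w‖ ^ 2) := by
  set δ := sphDist z w with hδ
  have hδ₀ : 0 ≤ δ := sphDist_nonneg _ _
  have hw : √(1 + ‖w‖ ^ 2) ^ 2 = 1 + ‖w‖ ^ 2 := Real.sq_sqrt (by positivity)
  have hz : √(1 + ‖z‖ ^ 2) ≤ √(1 + ‖w‖ ^ 2) + ‖z - w‖ := by
    have hwle : ‖w‖ ≤ √(1 + ‖w‖ ^ 2) := Real.le_sqrt_of_sq_le (by linarith)
    have hzle : ‖z‖ ≤ ‖w‖ + ‖z - w‖ := norm_le_norm_add_norm_sub' z w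
    refine Real.sqrt_le_iff.2 ⟨by positivity, ?_⟩
    nlinarith [norm_nonneg z, norm_nonneg (z - w)]
  have hchord : 2 * ‖z - w‖ = δ * √(1 + ‖w‖ ^ 2) * √(1 + ‖z‖ ^ 2) := by
    rw [hδ, sphDist_coe_coe]
    field_simp
  have hbound : 2 * ‖z - w‖ ≤ δ * (1 + ‖w‖ ^ 2) + ‖z - w‖ := calc
    2 * ‖z - w‖ = δ * √(1 + ‖w‖ ^ 2) * √(1 + ‖z‖ ^ 2) := hchord
    _ ≤ δ * √(1 + ‖w‖ ^ 2) * (√(1 + ‖w‖ ^ 2) + ‖z - w‖) := by gcongr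
    _ = δ * (√(1 + ‖w‖ ^ 2) ^ 2) + δ * √(1 + ‖w‖ ^ 2) * ‖z - w‖ := by ring
    _ = δ * (1 + ‖w‖ ^ 2) + δ * √(1 + ‖w‖ ^ 2) * ‖z - w‖ := by rw [hw]
    _ ≤ δ * (1 + ‖w‖ ^ 2) + 1 * ‖z - w‖ := by gcongr
    _ = δ * (1 + ‖w‖ ^ 2) + ‖z - w‖ := by rw [one_mul]
  linarith

theorem SphLocUnifOn.tendstoLocallyUniformlyOn {f : ℕ → ℂ → ℂ} {g : ℂ → ℂ} {U : Set ℂ}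
    (h : SphLocUnifOn (fun n z => (f n z : OnePoint ℂ)) (fun z => (g z : OnePoint ℂ)) U)
    (hg : ContinuousOn g U) : TendstoLocallyUniformlyOn f g atTop U := by
  rw [tendstoLocallyUniformlyOn_iff_tendsto_prod hg]
  intro x hx
  have hgx : Tendsto (fun p : ℕ × ℂ => g p.2) (atTop ×ˢ 𝓝[U] x) (𝓝 (g x)) :=
    (hg x hx).tendsto.comp tendsto_snd
  have hdist := sphLocUnifOn_iff_tendsto.1 h x hx
  have hg_sq := (hgx.norm.pow 2).const_add 1
  have hsmall : ∀ᶠ p : ℕ × ℂ in atTop ×ˢ 𝓝[U] x,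
      sphDist (f p.1 p.2) (g p.2) * √(1 + ‖g p.2‖ ^ 2) ≤ 1 :=
    (hdist.mul hg_sq.sqrt).eventually_le_const (by simp)
  have hsub : Tendsto (fun p : ℕ × ℂ => f p.1 p.2 - g p.2) (atTop ×ˢ 𝓝[U] x) (𝓝 0) :=
    squeeze_zero_norm' (hsmall.mono fun _ => norm_sub_le_sphDist_mul)
      (by simpa using hdist.mul hg_sq)
  simpa using hsub.add hgx

end SphericalConvergence

section LogarithmicDerivatives

theorem toSphere_of_continuousAt {f : ℂ → ℂ} {z : ℂ} (hf : ContinuousAt f z) :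
    toSphere f z = f z :=
  if_neg fun hz => not_tendsto_nhds_of_tendsto_atTop hz _ (hf.norm.mono_left nhdsWithin_le_nhds)

theorem derivQuot_eq_logDeriv (j : ℕ) (f : ℂ → ℂ) :
    derivQuot j f = logDeriv (iteratedDeriv j f) := by
  ext z
  rw [derivQuot, iteratedDeriv_succ, logDeriv_apply]

theorem mem_polesOf_logDeriv {f : ℂ → ℂ} {z : ℂ} (hf : ContinuousAt (deriv f) z)
    (hf' : deriv f z ≠ 0) (hz : f z = 0) : z ∈ polesOf (logDeriv f) := by
  have hfz := differentiableAt_of_deriv_ne_zero hf'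
  have hnum : Tendsto (fun w => ‖deriv f w‖) (𝓝[≠] z) (𝓝 ‖deriv f z‖) :=
    hf.norm.mono_left nhdsWithin_le_nhds
  have hden : Tendsto (fun w => ‖f w‖) (𝓝[≠] z) (𝓝[>] 0) := by
    refine tendsto_nhdsWithin_iff.2 ⟨?_, ?_⟩
    · simpa [hz] using hfz.continuousAt.norm.mono_left (nhdsWithin_le_nhds (s := {z}ᶜ))
    · exact (hfz.hasDerivAt.eventually_ne hf').mono fun _ => norm_pos_iff.2
  refine (hnum.pos_mul_atTop (norm_pos_iff.2 hf') hden.inv_tendsto_nhdsGT_zero).congr fun w => ?_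
  rw [logDeriv_apply, norm_div, div_eq_mul_inv, Pi.inv_apply]

theorem toSphere_logDeriv_eqOn {f : ℂ → ℂ} {U : Set ℂ} (hUo : IsOpen U)
    (hf : ∀ z ∈ U, deriv f z ≠ 0) :
    Set.EqOn (toSphere (logDeriv f)) (fun z => sphereQuot (deriv f z) (f z)) U := by
  intro z hz
  have hfd : DifferentiableOn ℂ f U := differentiableOn_of_deriv_ne_zero hf
  have hf' : ContinuousAt (deriv f) z := (hfd.deriv hUo).continuousOn.continuousAt (hUo.mem_nhds hz)
  dsimp only
  rcases eq_or_ne (f z) 0 with hfz | hfz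
  · rw [hfz, sphereQuot_zero]
    exact if_pos (mem_polesOf_logDeriv hf' (hf z hz) hfz)
  · rw [sphereQuot_of_ne_zero _ hfz]
    exact toSphere_of_continuousAt
      (hf'.div (hfd.continuousOn.continuousAt (hUo.mem_nhds hz)) hfz)

theorem tendstoLocallyUniformlyOn_logDeriv_deriv {f : ℕ → ℂ → ℂ} {F : ℂ → ℂ} {U : Set ℂ}
    (hUo : IsOpen U) (hf : ∀ n, ∀ z ∈ U, deriv (f n) z ≠ 0) (hF : ContinuousOn F U)
    (h : SphLocUnifOn (fun n => toSphere (derivQuot 1 (f n))) (fun z => (F z : OnePoint ℂ)) U) :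
    TendstoLocallyUniformlyOn (fun n => logDeriv (deriv (f n))) F atTop U := by
  refine SphLocUnifOn.tendstoLocallyUniformlyOn (h.congr fun n z hz => ?_) hF
  have hderiv : DifferentiableOn ℂ (deriv (f n)) U :=
    (differentiableOn_of_deriv_ne_zero (hf n)).deriv hUo
  rw [derivQuot_eq_logDeriv, iteratedDeriv_one]
  exact toSphere_of_continuousAt <|
    ((hderiv.deriv hUo).div hderiv (hf n)).continuousOn.continuousAt (hUo.mem_nhds hz)

variable {g : ℕ → ℂ → ℂ} {h : ℂ → ℂ} {U : Set ℂ}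

theorem sphLocUnifOn_logDeriv (hUo : IsOpen U) (hg : ∀ k, ∀ z ∈ U, deriv (g k) z ≠ 0)
    (hgh : TendstoLocallyUniformlyOn g h atTop U) (hh : ∀ z ∈ U, deriv h z ≠ 0 ∨ h z ≠ 0) :
    SphLocUnifOn (fun k => toSphere (logDeriv (g k)))
      (fun z => sphereQuot (deriv h z) (h z)) U := by
  have hgd : ∀ k, DifferentiableOn ℂ (g k) U := fun k => differentiableOn_of_deriv_ne_zero (hg k)
  have hhd : DifferentiableOn ℂ h U := hgh.differentiableOn (.of_forall hgd) hUo
  have hh' : ContinuousOn (deriv h) U := (hhd.deriv hUo).continuousOn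
  refine SphLocUnifOn.congr (sphLocUnifOn_iff_tendsto.2 fun x hx => ?_)
    fun k => (toSphere_logDeriv_eqOn hUo (hg k)).symm
  have hlim := (tendstoLocallyUniformlyOn_iff_tendsto_prod hhd.continuousOn).1 hgh x hx
  have hlim' := (tendstoLocallyUniformlyOn_iff_tendsto_prod hh').1
    (hgh.deriv (.of_forall hgd) hUo) x hx
  rw [← sphDist_self (sphereQuot (deriv h x) (h x))]
  exact tendsto_sphDist_sphereQuot hlim' hlim ((hh' x hx).tendsto.comp tendsto_snd)
    ((hhd.continuousOn x hx).tendsto.comp tendsto_snd) (hh x hx) (hh x hx)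

theorem not_sphLocUnifOn_logDeriv_infty (hUo : IsOpen U) (hUne : U.Nonempty)
    (hg : ∀ k, ∀ z ∈ U, deriv (g k) z ≠ 0) (hgh : TendstoLocallyUniformlyOn g h atTop U)
    (hh : ∀ z ∈ U, deriv h z ≠ 0 ∨ h z ≠ 0) :
    ¬ SphLocUnifOn (fun k => toSphere (logDeriv (g k))) (fun _ => OnePoint.infty) U := by
  intro hinfty
  have hgd : ∀ k, DifferentiableOn ℂ (g k) U := fun k => differentiableOn_of_deriv_ne_zero (hg k)
  have hzero : ∀ x ∈ U, h x = 0 := by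
    intro x hx
    have hlim : Tendsto (fun k => sphDist (sphereQuot (deriv (g k) x) (g k x)) (sphereQuot 1 0))
        atTop (𝓝 (sphDist (sphereQuot (deriv h x) (h x)) (sphereQuot 1 0))) :=
      tendsto_sphDist_sphereQuot ((hgh.deriv (.of_forall hgd) hUo).tendsto_at hx)
        (hgh.tendsto_at hx) tendsto_const_nhds tendsto_const_nhds (hh x hx) (.inl one_ne_zero)
    have hlim₀ := (hinfty.congr fun k => toSphere_logDeriv_eqOn hUo (hg k)).tendsto_sphDist hx
    rw [sphereQuot_zero, sphDist_sphereQuot_infty (hh x hx)] at hlim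
    simpa [sqrt_norm_sq_add_norm_sq_ne_zero (hh x hx)] using tendsto_nhds_unique hlim hlim₀
  obtain ⟨x, hx⟩ := hUne
  have hderiv : deriv h x = 0 := by
    have hloc : h =ᶠ[𝓝 x] fun _ => 0 := eventually_of_mem (hUo.mem_nhds hx) hzero
    rw [hloc.deriv_eq, deriv_const]
  exact (hh x hx).elim (· hderiv) (· (hzero x hx))

end LogarithmicDerivatives

theorem normal_log_derivatives_from_preSchwarzian_general {U : Set ℂ} (hUo : IsOpen U)
    (hUc : IsConnected U) (f : ℕ → ℂ → ℂ) (F1 : ℂ → ℂ) (hF1 : ContinuousOn F1 U)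
    (hconv : SphLocUnifOn (fun n => toSphere (derivQuot 1 (f n)))
      (fun z => (F1 z : OnePoint ℂ)) U)
    (hzf : ∀ n, ∀ z ∈ U, deriv (f n) z ≠ 0) :
    (∀ φ : ℕ → ℕ, StrictMono φ → ∃ ψ : ℕ → ℕ, StrictMono ψ ∧
      ∃ g : ℂ → OnePoint ℂ,
        SphLocUnifOn (fun k => toSphere (derivQuot 0 (f (φ (ψ k))))) g U) ∧
    ∀ φ : ℕ → ℕ, StrictMono φ →
      ¬ SphLocUnifOn (fun k => toSphere (derivQuot 0 (f (φ k))))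
        (fun _ => OnePoint.infty) U := by
  have hlog (φ : ℕ → ℕ) (hφ : StrictMono φ) :
      TendstoLocallyUniformlyOn (fun k => logDeriv (deriv (f (φ k)))) F1 atTop U :=
    tendstoLocallyUniformlyOn_logDeriv_deriv hUo (fun k => hzf (φ k)) hF1
      (hconv.comp_tendsto hφ.tendsto_atTop)
  simp only [derivQuot_eq_logDeriv, iteratedDeriv_zero]
  refine ⟨fun φ hφ => ?_, fun φ hφ hinfty => ?_⟩ <;>
    obtain ⟨ψ, hψ, g, h, hgf, hg, hgh, hh⟩ :=
      exists_subseq_logDeriv_eq_tendstoLocallyUniformlyOn hUo hUc (fun k => hzf (φ k)) (hlog φ hφ)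
  · refine ⟨ψ, hψ, fun z => sphereQuot (deriv h z) (h z), ?_⟩
    simpa only [hgf] using sphLocUnifOn_logDeriv hUo hg hgh hh
  · refine not_sphLocUnifOn_logDeriv_infty hUo hUc.nonempty hg hgh hh ?_
    simpa only [hgf] using hinfty.comp_tendsto hψ.tendsto_atTop

/-- **Lemma (normality of the logarithmic derivatives when `E = ∅`).**
Let the `fₙ` be meromorphic on `𝔻`, with `fₙ''/fₙ'` converging locally uniformly on all of
`𝔻` to `F₁` holomorphic on `𝔻`, and `fₙ'` zero-free on `𝔻` for every `n`. Then `(fₙ'/fₙ)ₙ`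
is normal on `𝔻` and no subsequence of `(fₙ'/fₙ)ₙ` converges locally uniformly to the
constant `∞` on `𝔻`. -/
theorem normal_log_derivatives_from_preSchwarzian
    (f : ℕ → ℂ → ℂ) (hf : ∀ n, MeromorphicOn (f n) unitDisk)
    (F1 : ℂ → ℂ) (hF1 : DifferentiableOn ℂ F1 unitDisk)
    (hconv : SphLocUnifOn (fun n => toSphere (derivQuot 1 (f n)))
      (fun z => (F1 z : OnePoint ℂ)) unitDisk)
    (hzf : ∀ n, ∀ z ∈ unitDisk, deriv (f n) z ≠ 0) :
    (∀ φ : ℕ → ℕ, StrictMono φ → ∃ ψ : ℕ → ℕ, StrictMono ψ ∧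
      ∃ g : ℂ → OnePoint ℂ,
        SphLocUnifOn (fun k => toSphere (derivQuot 0 (f (φ (ψ k))))) g unitDisk) ∧
    ∀ φ : ℕ → ℕ, StrictMono φ →
      ¬ SphLocUnifOn (fun k => toSphere (derivQuot 0 (f (φ k))))
        (fun _ => OnePoint.infty) unitDisk := by
  exact normal_log_derivatives_from_preSchwarzian_general Metric.isOpen_ball
    (Metric.isConnected_ball one_pos) f F1 hF1.continuousOn hconv hzf

end
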